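/- Let X, Y, Z, W, V be types, g : X → Z, h : Y → W, and f : Z × W → V. Then the Zadeh extension of the composite function (x, y) ↦ f(g(x), h(y)) applied to fuzzy elements 𝗑 ∈ F(X), 𝗒 ∈ F(Y) equals the composite of the Zadeh extensions: for every v ∈ V, (f ∘ (g × h))~(𝗑, 𝗒)[v] = f̃( g̃(𝗑), h̃(𝗒) )[v]. That is, Zadeh extension is compositional when the arguments of the inner functions are disjoint variables. -/

import Mathlib

open Set

/-- Zadeh extension of a one-argument function applied to a fuzzy element. -/
noncomputable def zadeh1 {X Z : Type*} (g : X → Z) (x : X → ℝ) : Z → ℝ :=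
  fun z => sSup {m : ℝ | ∃ a : X, g a = z ∧ m = x a}

/-- Zadeh extension of a two-argument function applied to fuzzy elements. -/
noncomputable def zadeh2 {Z W V : Type*} (f : Z → W → V) (x : Z → ℝ) (y : W → ℝ) : V → ℝ :=
  fun v => sSup {m : ℝ | ∃ a b, f a b = v ∧ m = min (x a) (y b)}

/-!
A fuzzy element is determined by its strict superlevel sets `{t | r < 𝗑[t]}`, `0 ≤ r`. A supremum
exceeds `r` exactly when one of its terms does, so Zadeh extension acts on these sets as the
ordinary direct image, and direct images are compositional. Only levels `0 ≤ r` are usable: over an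
empty fibre the supremum is `0`, which exceeds every negative level.
-/

theorem eq_of_forall_ge_lt_iff {α : Type*} [LinearOrder α] {a b c : α} (ha : c ≤ a) (hb : c ≤ b)
    (h : ∀ r, c ≤ r → (r < a ↔ r < b)) : a = b :=
  eq_of_forall_lt_iff fun r =>
    (le_or_gt c r).elim (h r) fun hr => iff_of_true (hr.trans_le ha) (hr.trans_le hb)

theorem lt_csSup_iff_of_sSup_empty_le {α : Type*} [ConditionallyCompleteLinearOrder α]
    {s : Set α} {r : α} (hs : BddAbove s) (hr : sSup ∅ ≤ r) : r < sSup s ↔ ∃ m ∈ s, r < m := by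
  obtain rfl | hne := s.eq_empty_or_nonempty
  · simpa only [mem_empty_iff_false, false_and, exists_false, iff_false, not_lt] using hr
  · exact lt_csSup_iff hs hne

section ZadehExtension

variable {X Y Z W V : Type*}

theorem lt_zadeh1_iff (g : X → Z) {x : X → ℝ} (hx : BddAbove (range x)) (z : Z) {r : ℝ}
    (hr : 0 ≤ r) : r < zadeh1 g x z ↔ ∃ a, g a = z ∧ r < x a := by
  have hbdd : BddAbove {m : ℝ | ∃ a, g a = z ∧ m = x a} :=
    hx.mono <| by rintro _ ⟨a, -, rfl⟩; exact mem_range_self a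
  rw [zadeh1, lt_csSup_iff_of_sSup_empty_le hbdd (Real.sSup_empty.trans_le hr)]
  constructor
  · rintro ⟨_, ⟨a, ha, rfl⟩, hra⟩
    exact ⟨a, ha, hra⟩
  · rintro ⟨a, ha, hra⟩
    exact ⟨x a, ⟨a, ha, rfl⟩, hra⟩

theorem lt_zadeh2_iff (f : Z → W → V) {x : Z → ℝ} (hx : BddAbove (range x)) (y : W → ℝ) (v : V)
    {r : ℝ} (hr : 0 ≤ r) : r < zadeh2 f x y v ↔ ∃ a b, f a b = v ∧ r < x a ∧ r < y b := by
  obtain ⟨M, hM⟩ := hx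
  have hbdd : BddAbove {m : ℝ | ∃ a b, f a b = v ∧ m = min (x a) (y b)} := by
    refine ⟨M, ?_⟩
    rintro _ ⟨a, b, -, rfl⟩
    exact (min_le_left _ _).trans (hM (mem_range_self a))
  rw [zadeh2, lt_csSup_iff_of_sSup_empty_le hbdd (Real.sSup_empty.trans_le hr)]
  constructor
  · rintro ⟨_, ⟨a, b, hab, rfl⟩, hrab⟩
    exact ⟨a, b, hab, lt_min_iff.1 hrab⟩
  · rintro ⟨a, b, hab, hrab⟩
    exact ⟨min (x a) (y b), ⟨a, b, hab, rfl⟩, lt_min_iff.2 hrab⟩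

theorem zadeh1_nonneg (g : X → Z) {x : X → ℝ} (hx : 0 ≤ x) : 0 ≤ zadeh1 g x := by
  refine fun z => Real.sSup_nonneg ?_
  rintro _ ⟨a, -, rfl⟩
  exact hx a

theorem zadeh2_nonneg (f : Z → W → V) {x : Z → ℝ} {y : W → ℝ} (hx : 0 ≤ x) (hy : 0 ≤ y) :
    0 ≤ zadeh2 f x y := by
  refine fun v => Real.sSup_nonneg ?_
  rintro _ ⟨a, b, -, rfl⟩
  exact le_min (hx a) (hy b)

theorem bddAbove_range_zadeh1 (g : X → Z) {x : X → ℝ} (hx : BddAbove (range x)) :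
    BddAbove (range (zadeh1 g x)) := by
  obtain ⟨M, hM⟩ := hx
  refine ⟨max M 0, ?_⟩
  rintro _ ⟨z, rfl⟩
  refine Real.sSup_le ?_ (le_max_right M 0)
  rintro _ ⟨a, -, rfl⟩
  exact (hM (mem_range_self a)).trans (le_max_left M 0)

theorem zadeh_compositional_general (g : X → Z) (h : Y → W) (f : Z → W → V) {x : X → ℝ}
    {y : Y → ℝ} (hx₀ : 0 ≤ x) (hx : BddAbove (range x)) (hy₀ : 0 ≤ y) (hy : BddAbove (range y)) :
    zadeh2 (fun a b => f (g a) (h b)) x y = zadeh2 f (zadeh1 g x) (zadeh1 h y) := by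
  ext v
  refine eq_of_forall_ge_lt_iff (zadeh2_nonneg _ hx₀ hy₀ v)
    (zadeh2_nonneg f (zadeh1_nonneg g hx₀) (zadeh1_nonneg h hy₀) v) fun r hr => ?_
  calc r < zadeh2 (fun a b => f (g a) (h b)) x y v
    _ ↔ ∃ a b, f (g a) (h b) = v ∧ r < x a ∧ r < y b := lt_zadeh2_iff _ hx y v hr
    _ ↔ ∃ c d, f c d = v ∧ (∃ a, g a = c ∧ r < x a) ∧ ∃ b, h b = d ∧ r < y b :=
      ⟨fun ⟨a, b, hv, ha, hb⟩ => ⟨g a, h b, hv, ⟨a, rfl, ha⟩, b, rfl, hb⟩,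
        fun ⟨_, _, hv, ⟨a, hc, ha⟩, b, hd, hb⟩ => ⟨a, b, hc ▸ hd ▸ hv, ha, hb⟩⟩
    _ ↔ ∃ c d, f c d = v ∧ r < zadeh1 g x c ∧ r < zadeh1 h y d := by
      simp only [lt_zadeh1_iff g hx _ hr, lt_zadeh1_iff h hy _ hr]
    _ ↔ r < zadeh2 f (zadeh1 g x) (zadeh1 h y) v :=
      (lt_zadeh2_iff f (bddAbove_range_zadeh1 g hx) _ v hr).symm

end ZadehExtension

theorem zadeh_compositional {X Y Z W V : Type*}
    (g : X → Z) (h : Y → W) (f : Z → W → V)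
    (x : X → ℝ) (y : Y → ℝ)
    (hx : ∀ t, x t ∈ Icc (0:ℝ) 1) (hy : ∀ t, y t ∈ Icc (0:ℝ) 1) :
    ∀ v : V,
      zadeh2 (fun a b => f (g a) (h b)) x y v =
        zadeh2 f (zadeh1 g x) (zadeh1 h y) v :=
  congrFun <| zadeh_compositional_general g h f
    (fun t => (hx t).1) ⟨1, forall_mem_range.2 fun t => (hx t).2⟩
    (fun t => (hy t).1) ⟨1, forall_mem_range.2 fun t => (hy t).2⟩
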